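/- Let Γ be an access structure on 5 players satisfying monotonicity, no-cloning and no-redundancy that admits a pure QSS state. Then Γ is homogeneous: all sets in Γ_min have the same cardinality. -/

import Mathlib

open Finset

/-- Monotonicity of an access structure on `n` players (players = `Fin n`). -/
def Monotonic {n : ℕ} (Γ : Finset (Fin n) → Prop) : Prop :=
  ∀ A B : Finset (Fin n), Γ A → A ⊆ B → Γ B

/-- No-cloning: a set is authorized iff its complement is not. -/
def NoCloning {n : ℕ} (Γ : Finset (Fin n) → Prop) : Prop :=
  ∀ A : Finset (Fin n), Γ A ↔ ¬ Γ Aᶜ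

/-- `A` is a minimal authorized set of `Γ`. -/
def IsMinimal {n : ℕ} (Γ : Finset (Fin n) → Prop) (A : Finset (Fin n)) : Prop :=
  Γ A ∧ ∀ B : Finset (Fin n), B ⊂ A → ¬ Γ B

/-- No-redundancy: every player lies in some minimal authorized set. -/
def NoRedundancy {n : ℕ} (Γ : Finset (Fin n) → Prop) : Prop :=
  ∀ i : Fin n, ∃ A : Finset (Fin n), IsMinimal Γ A ∧ i ∈ A

noncomputable section

/-- Combine an assignment on `A` and one on `Aᶜ` into a full bit string. -/
def glue {m : ℕ} (A : Finset (Fin m)) (u : {x // x ∈ A} → Fin 2)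
    (w : {x // x ∈ Aᶜ} → Fin 2) : Fin m → Fin 2 :=
  fun x => if h : x ∈ A then u ⟨x, h⟩ else w ⟨x, Finset.mem_compl.mpr h⟩

/-- Reduced density matrix of the pure state `ψ` on the qubit positions in `A`:
the partial trace over the positions outside `A` of `ψψ†`. -/
def reducedDensity {m : ℕ} (ψ : (Fin m → Fin 2) → ℂ) (A : Finset (Fin m)) :
    Matrix ({x // x ∈ A} → Fin 2) ({x // x ∈ A} → Fin 2) ℂ :=
  fun u v => ∑ w : {x // x ∈ Aᶜ} → Fin 2,
    ψ (glue A u w) * (starRingEnd ℂ) (ψ (glue A v w))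

/-- The reduction of `ψ` to `A` is maximally mixed, i.e. equals `2^{-|A|} · I`. -/
def MaximallyMixed {m : ℕ} (ψ : (Fin m → Fin 2) → ℂ) (A : Finset (Fin m)) : Prop :=
  reducedDensity ψ A =
    ((2 : ℂ) ^ A.card)⁻¹ •
      (1 : Matrix ({x // x ∈ A} → Fin 2) ({x // x ∈ A} → Fin 2) ℂ)

open Classical in
/-- Von Neumann entropy (natural logarithm): sum of `-λ log λ` over the eigenvalues. -/
def vnEntropy {ι : Type} [Fintype ι] [DecidableEq ι] (ρ : Matrix ι ι ℂ) : ℝ :=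
  if h : ρ.IsHermitian then ∑ i, Real.negMulLog (h.eigenvalues i) else 0

/-- Entropy of the reduction of `ψ` to the set `A` of qubit positions. -/
def Sent {m : ℕ} (ψ : (Fin m → Fin 2) → ℂ) (A : Finset (Fin m)) : ℝ :=
  vnEntropy (reducedDensity ψ A)

/-- The qubit positions (in `{0,1,…,n} = Fin (n+1)`, where `0` is the reference qubit)
of a set of players `A ⊆ Fin n`: player `i` holds position `i.succ`. -/
def posOf {n : ℕ} (A : Finset (Fin n)) : Finset (Fin (n + 1)) := A.image Fin.succ

/-- `ψ` is a pure QSS state for the access structure `Γ`: a normalized pure state of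
`n+1` qubits (position `0` being the reference qubit `R`) satisfying Recoverability
`S(R) + S(A) - S(R ∪ A) = 2 log 2` for authorized `A` and Secrecy
`S(R) + S(B) - S(R ∪ B) = 0` for unauthorized `B`. -/
structure IsPureQSSState {n : ℕ} (Γ : Finset (Fin n) → Prop)
    (ψ : (Fin (n + 1) → Fin 2) → ℂ) : Prop where
  normalized : ∑ x : Fin (n + 1) → Fin 2, ‖ψ x‖ ^ 2 = 1
  recover : ∀ A : Finset (Fin n), Γ A →
    Sent ψ {0} + Sent ψ (posOf A) - Sent ψ (insert 0 (posOf A)) = 2 * Real.log 2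
  secrecy : ∀ B : Finset (Fin n), ¬ Γ B →
    Sent ψ {0} + Sent ψ (posOf B) - Sent ψ (insert 0 (posOf B)) = 0

end

/-!
Let `R` be the reference qubit and `a`, `b` two players, neither of which is authorized alone. If
together they were authorized, subadditivity and the Araki–Lieb inequality would force every pair
among `R`, `a`, `b` to be maximally mixed while `S(R, a, b) = log 2`. But if all two-qubit marginals
of a three-qubit state `ρ` are maximally mixed, then spin-flipping one qubit after the other turns
`ρ` into `1/4 - ρ`, then back into `ρ`, then into `1/4 - ρ`; the spin flip of all three qubits
preserves positivity, so `ρ ≤ 1/4` and `S(ρ) ≥ 2 log 2`, a contradiction. Hence no set of fewer than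
three players is authorized, and among five players no-cloning then makes every triple authorized.
-/

section

open Matrix InformationTheory
open scoped ComplexOrder Kronecker

section Shannon

variable {α β : Type*} [Fintype α] [Fintype β]

lemma negMulLog_eq_sub_mul_klFun {p q : ℝ} (hq : q ≠ 0) :
    Real.negMulLog p = -(p * Real.log q) + (q - p) - q * klFun (p / q) := by
  rcases eq_or_ne p 0 with rfl | hp
  · simp [klFun_zero]
  · rw [Real.negMulLog, klFun_apply, Real.log_div hp hq]
    field_simp
    ring

lemma negMulLog_le_neg_mul_log_add {p q : ℝ} (hp : 0 ≤ p) (hq : 0 < q) :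
    Real.negMulLog p ≤ -(p * Real.log q) + (q - p) := by
  rw [negMulLog_eq_sub_mul_klFun hq.ne']
  exact sub_le_self _ (mul_nonneg hq.le (klFun_nonneg (div_nonneg hp hq.le)))

lemma negMulLog_le_of_le_of_le {p a b : ℝ} (hp : 0 ≤ p) (ha : p ≤ a) (hb : p ≤ b) :
    Real.negMulLog p ≤ -(p * Real.log a) - p * Real.log b + (a * b - p) := by
  rcases hp.eq_or_lt with rfl | hp
  · simpa using mul_nonneg ha hb
  · have ha := hp.trans_le ha
    have hb := hp.trans_le hb
    have gibbs := negMulLog_le_neg_mul_log_add hp.le (mul_pos ha hb)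
    rw [Real.log_mul ha.ne' hb.ne'] at gibbs
    linarith

lemma sum_negMulLog_le_sum_marginals {p : α → β → ℝ} (hp : ∀ i j, 0 ≤ p i j)
    (hsum : ∑ i, ∑ j, p i j = 1) :
    ∑ i, ∑ j, Real.negMulLog (p i j) ≤
      ∑ i, Real.negMulLog (∑ j, p i j) + ∑ j, Real.negMulLog (∑ i, p i j) := by
  let a : α → ℝ := fun i => ∑ j, p i j
  let b : β → ℝ := fun j => ∑ i, p i j
  have hb : ∑ j, b j = 1 := by rw [Finset.sum_comm, hsum]
  have left_entropy : ∑ i, ∑ j, p i j * Real.log (a i) = -∑ i, Real.negMulLog (a i) := by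
    simp only [← Finset.sum_mul, Real.negMulLog, neg_mul, Finset.sum_neg_distrib, neg_neg, a]
  have right_entropy : ∑ i, ∑ j, p i j * Real.log (b j) = -∑ j, Real.negMulLog (b j) := by
    rw [Finset.sum_comm]
    simp only [← Finset.sum_mul, Real.negMulLog, neg_mul, Finset.sum_neg_distrib, neg_neg, b]
  have product_mass : ∑ i, ∑ j, a i * b j = 1 := by
    rw [← Finset.sum_mul_sum, hb, mul_one, hsum]
  calc ∑ i, ∑ j, Real.negMulLog (p i j)
      ≤ ∑ i, ∑ j,
          (-(p i j * Real.log (a i)) - p i j * Real.log (b j) + (a i * b j - p i j)) :=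
        Finset.sum_le_sum fun i _ => Finset.sum_le_sum fun j _ =>
          negMulLog_le_of_le_of_le (hp i j)
            (Finset.single_le_sum (fun j _ => hp i j) (Finset.mem_univ j))
            (Finset.single_le_sum (f := fun i => p i j) (fun i _ => hp i j) (Finset.mem_univ i))
    _ = ∑ i, Real.negMulLog (a i) + ∑ j, Real.negMulLog (b j) := by
        simp only [Finset.sum_add_distrib, Finset.sum_sub_distrib, Finset.sum_neg_distrib,
          left_entropy, right_entropy, product_mass, hsum]
        ring

end Shannon

section VonNeumann

variable {ι κ : Type} [Fintype ι] [DecidableEq ι] [Fintype κ] [DecidableEq κ]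

lemma vnEntropy_eq_sum_eigenvalues {ρ : Matrix ι ι ℂ} (hρ : ρ.IsHermitian) :
    vnEntropy ρ = ∑ i, Real.negMulLog (hρ.eigenvalues i) :=
  dif_pos hρ

lemma vnEntropy_eq_sum_roots_charpoly {ρ : Matrix ι ι ℂ} (hρ : ρ.IsHermitian) :
    vnEntropy ρ = (ρ.charpoly.roots.map fun z => Real.negMulLog z.re).sum := by
  rw [vnEntropy_eq_sum_eigenvalues hρ, hρ.roots_charpoly_eq_eigenvalues, Multiset.map_map]
  rfl

lemma vnEntropy_submatrix_equiv {ρ : Matrix ι ι ℂ} (hρ : ρ.IsHermitian) (e : κ ≃ ι) :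
    vnEntropy (ρ.submatrix e e) = vnEntropy ρ := by
  have hchar : (ρ.submatrix e e).charpoly = ρ.charpoly := charpoly_reindex e.symm ρ
  rw [vnEntropy_eq_sum_roots_charpoly (hρ.submatrix e), hchar, vnEntropy_eq_sum_roots_charpoly hρ]

lemma vnEntropy_transpose {ρ : Matrix ι ι ℂ} (hρ : ρ.IsHermitian) :
    vnEntropy ρᵀ = vnEntropy ρ := by
  rw [vnEntropy_eq_sum_roots_charpoly hρ.transpose, charpoly_transpose,
    vnEntropy_eq_sum_roots_charpoly hρ]

lemma vnEntropy_star_mul_mul {ρ : Matrix ι ι ℂ} (hρ : ρ.IsHermitian) {U : Matrix ι ι ℂ}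
    (hU : U ∈ unitaryGroup ι ℂ) : vnEntropy (star U * ρ * U) = vnEntropy ρ := by
  have hchar : (star U * ρ * U).charpoly = ρ.charpoly := by
    rw [mul_assoc, charpoly_mul_comm, mul_assoc, mem_unitaryGroup_iff.mp hU, mul_one]
  have hherm : (star U * ρ * U).IsHermitian := isHermitian_conjTranspose_mul_mul U hρ
  rw [vnEntropy_eq_sum_roots_charpoly hherm, hchar, vnEntropy_eq_sum_roots_charpoly hρ]

-- The two spectra differ only in the multiplicity of `0`, where `negMulLog` vanishes.
lemma vnEntropy_mul_conjTranspose_comm (M : Matrix ι κ ℂ) :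
    vnEntropy (M * Mᴴ) = vnEntropy (Mᴴ * M) := by
  rw [vnEntropy_eq_sum_roots_charpoly (isHermitian_mul_conjTranspose_self M),
    vnEntropy_eq_sum_roots_charpoly (isHermitian_conjTranspose_mul_self M)]
  have ne_zero {k : ℕ} {q : Polynomial ℂ} (hq : q.Monic) : Polynomial.X ^ k * q ≠ 0 :=
    ((Polynomial.monic_X_pow k).mul hq).ne_zero
  have hroots := congrArg
    (fun q : Polynomial ℂ => (q.roots.map fun z => Real.negMulLog z.re).sum)
    (charpoly_mul_comm' M Mᴴ)
  simpa [Polynomial.roots_mul, ne_zero, charpoly_monic, Polynomial.roots_X_pow,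
    Multiset.map_nsmul, Multiset.sum_nsmul] using hroots

lemma star_eigenvectorUnitary_mul_mul {ρ : Matrix ι ι ℂ} (hρ : ρ.IsHermitian) :
    star (hρ.eigenvectorUnitary : Matrix ι ι ℂ) * ρ * hρ.eigenvectorUnitary =
      diagonal fun i => (hρ.eigenvalues i : ℂ) := by
  simpa [Unitary.conjStarAlgAut_apply, Function.comp_def] using
    hρ.conjStarAlgAut_star_eigenvectorUnitary

lemma sum_eigenvalues_eq_one {ρ : Matrix ι ι ℂ} (hρ : ρ.IsHermitian) (htr : ρ.trace = 1) :
    ∑ i, hρ.eigenvalues i = 1 := by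
  have htrace := hρ.trace_eq_sum_eigenvalues
  rw [htr] at htrace
  simpa using (congrArg Complex.re htrace).symm

lemma sum_sq_norm_row_of_mem_unitaryGroup {U : Matrix ι ι ℂ} (hU : U ∈ unitaryGroup ι ℂ)
    (i : ι) : ∑ j, ‖U i j‖ ^ 2 = 1 := by
  have := congrFun₂ (mem_unitaryGroup_iff.mp hU) i i
  simp only [mul_apply, star_apply, RCLike.star_def, Complex.mul_conj', one_apply_eq] at this
  exact_mod_cast this

lemma sum_sq_norm_col_of_mem_unitaryGroup {U : Matrix ι ι ℂ} (hU : U ∈ unitaryGroup ι ℂ)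
    (j : ι) : ∑ i, ‖U i j‖ ^ 2 = 1 := by
  simpa using sum_sq_norm_row_of_mem_unitaryGroup (Unitary.star_mem hU) j

lemma re_diag_eq_sum_eigenvalues {ρ : Matrix ι ι ℂ} (hρ : ρ.IsHermitian) (i : ι) :
    (ρ i i).re = ∑ j, ‖(hρ.eigenvectorUnitary : Matrix ι ι ℂ) i j‖ ^ 2 * hρ.eigenvalues j := by
  have hentry := congrFun₂ hρ.spectral_theorem i i
  rw [Unitary.conjStarAlgAut_apply, mul_apply] at hentry
  rw [hentry, Complex.re_sum]
  refine Finset.sum_congr rfl fun j _ => ?_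
  rw [mul_diagonal, star_apply, mul_right_comm, RCLike.star_def, Complex.mul_conj',
    Function.comp_apply]
  simp [← Complex.ofReal_pow]

lemma vnEntropy_le_sum_negMulLog_diag {ρ : Matrix ι ι ℂ} (hρ : ρ.PosSemidef) :
    vnEntropy ρ ≤ ∑ i, Real.negMulLog (ρ i i).re := by
  have hU := hρ.isHermitian.eigenvectorUnitary.2
  set U : Matrix ι ι ℂ := ↑hρ.isHermitian.eigenvectorUnitary with hUdef
  set ev := hρ.isHermitian.eigenvalues with hev
  calc vnEntropy ρ = ∑ j, (∑ i, ‖U i j‖ ^ 2) * Real.negMulLog (ev j) := by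
        simp only [vnEntropy_eq_sum_eigenvalues hρ.isHermitian,
          sum_sq_norm_col_of_mem_unitaryGroup hU, one_mul, hev]
    _ = ∑ i, ∑ j, ‖U i j‖ ^ 2 * Real.negMulLog (ev j) := by
        simp only [Finset.sum_mul]
        exact Finset.sum_comm
    _ ≤ ∑ i, Real.negMulLog (∑ j, ‖U i j‖ ^ 2 * ev j) :=
        Finset.sum_le_sum fun i _ => Real.concaveOn_negMulLog.le_map_sum
          (fun _ _ => sq_nonneg _) (sum_sq_norm_row_of_mem_unitaryGroup hU i)
          fun j _ => hρ.eigenvalues_nonneg j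
    _ = ∑ i, Real.negMulLog (ρ i i).re := by
        simp only [re_diag_eq_sum_eigenvalues hρ.isHermitian, hUdef, hev]

-- The defect is the relative entropy of the spectrum with respect to the uniform distribution.
lemma vnEntropy_eq_log_card_sub_sum_klFun [Nonempty ι] {ρ : Matrix ι ι ℂ} (hρ : ρ.IsHermitian)
    (htr : ρ.trace = 1) :
    vnEntropy ρ = Real.log (Fintype.card ι) -
      ∑ i, (Fintype.card ι : ℝ)⁻¹ * klFun (hρ.eigenvalues i / (Fintype.card ι : ℝ)⁻¹) := by
  have hcard : (Fintype.card ι : ℝ)⁻¹ ≠ 0 := by simp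
  rw [vnEntropy_eq_sum_eigenvalues hρ,
    Finset.sum_congr rfl fun i _ => negMulLog_eq_sub_mul_klFun (p := hρ.eigenvalues i) hcard]
  simp only [Finset.sum_sub_distrib, Finset.sum_add_distrib, Finset.sum_neg_distrib,
    ← Finset.sum_mul, sum_eigenvalues_eq_one hρ htr]
  simp

lemma vnEntropy_le_log_card [Nonempty ι] {ρ : Matrix ι ι ℂ} (hρ : ρ.PosSemidef)
    (htr : ρ.trace = 1) : vnEntropy ρ ≤ Real.log (Fintype.card ι) := by
  rw [vnEntropy_eq_log_card_sub_sum_klFun hρ.isHermitian htr]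
  refine sub_le_self _ (Finset.sum_nonneg fun i _ => mul_nonneg (by positivity) ?_)
  exact klFun_nonneg (div_nonneg (hρ.eigenvalues_nonneg i) (by positivity))

lemma eq_inv_card_smul_one_of_vnEntropy_eq_log_card [Nonempty ι] {ρ : Matrix ι ι ℂ}
    (hρ : ρ.PosSemidef) (htr : ρ.trace = 1) (hmax : vnEntropy ρ = Real.log (Fintype.card ι)) :
    ρ = (Fintype.card ι : ℂ)⁻¹ • 1 := by
  have hcard : 0 < (Fintype.card ι : ℝ)⁻¹ := by simp [Fintype.card_pos]
  have hratio i := div_nonneg (hρ.eigenvalues_nonneg i) hcard.le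
  rw [vnEntropy_eq_log_card_sub_sum_klFun hρ.isHermitian htr, sub_eq_self,
    Finset.sum_eq_zero_iff_of_nonneg fun i _ => mul_nonneg hcard.le (klFun_nonneg (hratio i))]
    at hmax
  have heig i : hρ.isHermitian.eigenvalues i = (Fintype.card ι : ℝ)⁻¹ := by
    have hkl := (mul_eq_zero_iff_left hcard.ne').mp (hmax i (Finset.mem_univ i))
    exact (div_eq_one_iff_eq hcard.ne').mp ((klFun_eq_zero_iff (hratio i)).mp hkl)
  have hdiag : diagonal (RCLike.ofReal ∘ hρ.isHermitian.eigenvalues) =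
      (Fintype.card ι : ℂ)⁻¹ • (1 : Matrix ι ι ℂ) := by
    rw [smul_one_eq_diagonal]
    congr 1
    ext i
    simp [heig i]
  conv_lhs => rw [hρ.isHermitian.spectral_theorem, hdiag]
  simp

lemma eigenvalues_le_of_smul_one_sub_posSemidef {ρ : Matrix ι ι ℂ} (hρ : ρ.IsHermitian) {c : ℝ}
    (hle : ((c : ℂ) • (1 : Matrix ι ι ℂ) - ρ).PosSemidef) (i : ι) : hρ.eigenvalues i ≤ c := by
  have hdiag := (hle.conjTranspose_mul_mul_same
    (hρ.eigenvectorUnitary : Matrix ι ι ℂ)).diag_nonneg (i := i)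
  rw [← star_eq_conjTranspose, mul_sub, sub_mul, star_eigenvectorUnitary_mul_mul,
    Matrix.mul_smul, mul_one, Matrix.smul_mul, Unitary.coe_star_mul_self, Matrix.sub_apply,
    Matrix.smul_apply, one_apply_eq, diagonal_apply_eq, smul_eq_mul, mul_one, sub_nonneg] at hdiag
  exact_mod_cast hdiag

lemma neg_log_le_vnEntropy {ρ : Matrix ι ι ℂ} (hρ : ρ.PosSemidef) (htr : ρ.trace = 1) {c : ℝ}
    (hle : ((c : ℂ) • (1 : Matrix ι ι ℂ) - ρ).PosSemidef) : -Real.log c ≤ vnEntropy ρ := by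
  rw [vnEntropy_eq_sum_eigenvalues hρ.isHermitian]
  calc -Real.log c = ∑ i, hρ.isHermitian.eigenvalues i * -Real.log c := by
        rw [← Finset.sum_mul, sum_eigenvalues_eq_one hρ.isHermitian htr, one_mul]
    _ ≤ ∑ i, Real.negMulLog (hρ.isHermitian.eigenvalues i) := Finset.sum_le_sum fun i _ => by
        rcases (hρ.eigenvalues_nonneg i).eq_or_lt with hzero | hpos
        · simp [← hzero]
        · have hlog := Real.log_le_log hpos
            (eigenvalues_le_of_smul_one_sub_posSemidef hρ.isHermitian hle i)
          rw [Real.negMulLog, neg_mul, mul_neg]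
          exact neg_le_neg (mul_le_mul_of_nonneg_left hlog hpos.le)

end VonNeumann

section PartialTrace

variable {α β R : Type*}

/-- The partial trace of a bipartite matrix over its second tensor factor. -/
def partialTraceRight [AddCommMonoid R] [Fintype β] (ρ : Matrix (α × β) (α × β) R) :
    Matrix α α R :=
  of fun i i' => ∑ j, ρ (i, j) (i', j)

/-- The partial trace of a bipartite matrix over its first tensor factor. -/
def partialTraceLeft [AddCommMonoid R] [Fintype α] (ρ : Matrix (α × β) (α × β) R) :
    Matrix β β R :=
  of fun j j' => ∑ i, ρ (i, j) (i, j')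

lemma isHermitian_partialTraceRight [Fintype β] {ρ : Matrix (α × β) (α × β) ℂ}
    (hρ : ρ.IsHermitian) : (partialTraceRight ρ).IsHermitian := by
  ext i i'
  simp [partialTraceRight, ← hρ.apply (i, _)]

lemma isHermitian_partialTraceLeft [Fintype α] {ρ : Matrix (α × β) (α × β) ℂ}
    (hρ : ρ.IsHermitian) : (partialTraceLeft ρ).IsHermitian := by
  ext j j'
  simp [partialTraceLeft, ← hρ.apply (_, j)]

variable [Fintype α] [Fintype β]

lemma trace_partialTraceRight_mul [DecidableEq β] [CommSemiring R]
    (ρ : Matrix (α × β) (α × β) R) (X : Matrix α α R) :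
    (partialTraceRight ρ * X).trace = (ρ * (X ⊗ₖ 1)).trace := by
  simp only [trace, diag_apply, mul_apply, partialTraceRight, of_apply, Fintype.sum_prod_type,
    kroneckerMap_apply, one_apply, mul_ite, mul_one, mul_zero, Finset.sum_ite_eq',
    Finset.mem_univ, if_true, Finset.sum_mul]
  exact Finset.sum_congr rfl fun _ _ => Finset.sum_comm

lemma trace_partialTraceLeft_mul [DecidableEq α] [CommSemiring R]
    (ρ : Matrix (α × β) (α × β) R) (X : Matrix β β R) :
    (partialTraceLeft ρ * X).trace = (ρ * (1 ⊗ₖ X)).trace := by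
  simp only [trace, diag_apply, mul_apply, partialTraceLeft, of_apply, Fintype.sum_prod_type_right,
    kroneckerMap_apply, one_apply, ite_mul, one_mul, zero_mul, mul_ite, mul_zero,
    Finset.sum_ite_eq', Finset.mem_univ, if_true, Finset.sum_mul]
  exact Finset.sum_congr rfl fun _ _ => Finset.sum_comm

lemma partialTraceRight_star_kronecker_mul_mul [DecidableEq β] (ρ : Matrix (α × β) (α × β) ℂ)
    (U : Matrix α α ℂ) {V : Matrix β β ℂ} (hV : V ∈ unitaryGroup β ℂ) :
    partialTraceRight (star (U ⊗ₖ V) * ρ * (U ⊗ₖ V)) = star U * partialTraceRight ρ * U := by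
  classical
  refine ext_iff_trace_mul_right.mpr fun X => ?_
  have hconj : (U ⊗ₖ V) * (X ⊗ₖ 1) * star (U ⊗ₖ V) = (U * X * star U) ⊗ₖ 1 := by
    rw [star_eq_conjTranspose, conjTranspose_kronecker, ← mul_kronecker_mul, ← mul_kronecker_mul,
      mul_one, ← star_eq_conjTranspose V, mem_unitaryGroup_iff.mp hV, star_eq_conjTranspose]
  calc (partialTraceRight (star (U ⊗ₖ V) * ρ * (U ⊗ₖ V)) * X).trace
      = (ρ * ((U ⊗ₖ V) * (X ⊗ₖ 1) * star (U ⊗ₖ V))).trace := by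
        rw [trace_partialTraceRight_mul, mul_assoc, mul_assoc, trace_mul_comm, mul_assoc]
    _ = (partialTraceRight ρ * (U * X * star U)).trace := by
        rw [hconj, trace_partialTraceRight_mul]
    _ = (star U * partialTraceRight ρ * U * X).trace := by
        rw [← mul_assoc, trace_mul_comm, ← mul_assoc, ← mul_assoc]

lemma partialTraceLeft_star_kronecker_mul_mul [DecidableEq α] (ρ : Matrix (α × β) (α × β) ℂ)
    {U : Matrix α α ℂ} (hU : U ∈ unitaryGroup α ℂ) (V : Matrix β β ℂ) :
    partialTraceLeft (star (U ⊗ₖ V) * ρ * (U ⊗ₖ V)) = star V * partialTraceLeft ρ * V := by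
  classical
  refine ext_iff_trace_mul_right.mpr fun X => ?_
  have hconj : (U ⊗ₖ V) * (1 ⊗ₖ X) * star (U ⊗ₖ V) = 1 ⊗ₖ (V * X * star V) := by
    rw [star_eq_conjTranspose, conjTranspose_kronecker, ← mul_kronecker_mul, ← mul_kronecker_mul,
      mul_one, ← star_eq_conjTranspose U, mem_unitaryGroup_iff.mp hU, star_eq_conjTranspose]
  calc (partialTraceLeft (star (U ⊗ₖ V) * ρ * (U ⊗ₖ V)) * X).trace
      = (ρ * ((U ⊗ₖ V) * (1 ⊗ₖ X) * star (U ⊗ₖ V))).trace := by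
        rw [trace_partialTraceLeft_mul, mul_assoc, mul_assoc, trace_mul_comm, mul_assoc]
    _ = (partialTraceLeft ρ * (V * X * star V)).trace := by
        rw [hconj, trace_partialTraceLeft_mul]
    _ = (star V * partialTraceLeft ρ * V * X).trace := by
        rw [← mul_assoc, trace_mul_comm, ← mul_assoc, ← mul_assoc]

end PartialTrace

section Subadditivity

variable {α β : Type} [Fintype α] [Fintype β]

lemma sum_negMulLog_diag_le_partialTrace {σ : Matrix (α × β) (α × β) ℂ} (hσ : σ.PosSemidef)
    (htr : σ.trace = 1) :
    ∑ k, Real.negMulLog (σ k k).re ≤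
      ∑ i, Real.negMulLog (partialTraceRight σ i i).re +
        ∑ j, Real.negMulLog (partialTraceLeft σ j j).re := by
  simp only [Fintype.sum_prod_type, partialTraceRight, partialTraceLeft, of_apply, Complex.re_sum]
  refine sum_negMulLog_le_sum_marginals (fun i j => (Complex.nonneg_iff.mp hσ.diag_nonneg).1) ?_
  simpa [trace, Fintype.sum_prod_type] using congrArg Complex.re htr

-- Measuring in the product of the marginal eigenbases keeps both marginal entropies and can only
-- increase the joint one, so the classical inequality applies.
lemma vnEntropy_le_partialTrace_add_partialTrace [DecidableEq α] [DecidableEq β]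
    {ρ : Matrix (α × β) (α × β) ℂ} (hρ : ρ.PosSemidef) (htr : ρ.trace = 1) :
    vnEntropy ρ ≤ vnEntropy (partialTraceRight ρ) + vnEntropy (partialTraceLeft ρ) := by
  have hRight := isHermitian_partialTraceRight hρ.isHermitian
  have hLeft := isHermitian_partialTraceLeft hρ.isHermitian
  let U : Matrix α α ℂ := hRight.eigenvectorUnitary
  let V : Matrix β β ℂ := hLeft.eigenvectorUnitary
  have hU : U ∈ unitaryGroup α ℂ := hRight.eigenvectorUnitary.2
  have hV : V ∈ unitaryGroup β ℂ := hLeft.eigenvectorUnitary.2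
  have hUV : U ⊗ₖ V ∈ unitaryGroup (α × β) ℂ := kronecker_mem_unitary hU hV
  let σ := star (U ⊗ₖ V) * ρ * (U ⊗ₖ V)
  have hσ : σ.PosSemidef := hρ.conjTranspose_mul_mul_same (U ⊗ₖ V)
  have hσtr : σ.trace = 1 := by
    rw [trace_mul_comm, ← mul_assoc, mem_unitaryGroup_iff.mp hUV, one_mul, htr]
  have hσRight : partialTraceRight σ = diagonal fun i => (hRight.eigenvalues i : ℂ) := by
    rw [partialTraceRight_star_kronecker_mul_mul ρ U hV, star_eigenvectorUnitary_mul_mul]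
  have hσLeft : partialTraceLeft σ = diagonal fun j => (hLeft.eigenvalues j : ℂ) := by
    rw [partialTraceLeft_star_kronecker_mul_mul ρ hU V, star_eigenvectorUnitary_mul_mul]
  calc vnEntropy ρ = vnEntropy σ := (vnEntropy_star_mul_mul hρ.isHermitian hUV).symm
    _ ≤ ∑ k, Real.negMulLog (σ k k).re := vnEntropy_le_sum_negMulLog_diag hσ
    _ ≤ ∑ i, Real.negMulLog (partialTraceRight σ i i).re +
          ∑ j, Real.negMulLog (partialTraceLeft σ j j).re :=
        sum_negMulLog_diag_le_partialTrace hσ hσtr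
    _ = vnEntropy (partialTraceRight ρ) + vnEntropy (partialTraceLeft ρ) := by
        simp only [hσRight, hσLeft, diagonal_apply_eq, Complex.ofReal_re,
          vnEntropy_eq_sum_eigenvalues hRight, vnEntropy_eq_sum_eigenvalues hLeft]

end Subadditivity

section SpinFlip

variable {ι R : Type*} [DecidableEq ι] [CommRing R]

/-- The partial spin flip on the qubits in `s`: partial transposition there followed by conjugation
with the Pauli matrix `Y` on each of these qubits. Since `Y` is antidiagonal, on computational basis
states this exchanges and complements the bits in `s`, with one sign per bit equal to `1`. -/
def spinFlip (s : Finset ι) :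
    Matrix (ι → Fin 2) (ι → Fin 2) R →ₗ[R] Matrix (ι → Fin 2) (ι → Fin 2) R where
  toFun T := of fun u v =>
    (∏ i ∈ s, (-1) ^ (u i + v i : ℕ)) * T (s.piecewise (1 - v) u) (s.piecewise (1 - u) v)
  map_add' T T' := by ext; simp [mul_add]
  map_smul' k T := by ext; simp [mul_left_comm]

lemma spinFlip_apply (s : Finset ι) (T : Matrix (ι → Fin 2) (ι → Fin 2) R) (u v : ι → Fin 2) :
    spinFlip s T u v = (∏ i ∈ s, (-1) ^ (u i + v i : ℕ)) *
      T (s.piecewise (1 - v) u) (s.piecewise (1 - u) v) :=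
  rfl

lemma spinFlip_empty (T : Matrix (ι → Fin 2) (ι → Fin 2) R) : spinFlip ∅ T = T := by
  ext
  simp [spinFlip_apply]

lemma spinFlip_insert {s : Finset ι} {c : ι} (hc : c ∉ s)
    (T : Matrix (ι → Fin 2) (ι → Fin 2) R) :
    spinFlip (insert c s) T = spinFlip {c} (spinFlip s T) := by
  ext u v
  have flip_insert (x y : ι → Fin 2) : s.piecewise (1 - ({c} : Finset ι).piecewise (1 - x) y)
      (({c} : Finset ι).piecewise (1 - y) x) = (insert c s).piecewise (1 - y) x := by
    ext i
    by_cases hi : i = c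
    · simp [hi, hc]
    · by_cases his : i ∈ s <;> simp [hi, his]
  have sign_insert : ∏ i ∈ s, (-1 : R) ^ ((({c} : Finset ι).piecewise (1 - v) u i : ℕ) +
      (({c} : Finset ι).piecewise (1 - u) v i : ℕ)) = ∏ i ∈ s, (-1) ^ (u i + v i : ℕ) := by
    refine Finset.prod_congr rfl fun i hi => ?_
    have hic : i ≠ c := fun h => hc (h ▸ hi)
    simp [hic]
  rw [spinFlip_apply, spinFlip_apply, spinFlip_apply, flip_insert, flip_insert, sign_insert,
    Finset.prod_insert hc, Finset.prod_singleton, mul_assoc]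

lemma spinFlip_singleton_apply (c : ι) (T : Matrix (ι → Fin 2) (ι → Fin 2) R)
    (u v : ι → Fin 2) :
    spinFlip {c} T u v =
      (if u c = v c then ∑ t, T (Function.update u c t) (Function.update v c t) else 0) -
        T u v := by
  have hu := Function.update_eq_self c u
  have hv := Function.update_eq_self c v
  rw [spinFlip_apply, Finset.prod_singleton, Finset.piecewise_singleton,
    Finset.piecewise_singleton, Pi.sub_apply, Pi.sub_apply, Pi.one_apply]
  generalize u c = a at hu ⊢
  generalize v c = b at hv ⊢
  obtain rfl | rfl : a = 0 ∨ a = 1 := by omega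
  all_goals obtain rfl | rfl : b = 0 ∨ b = 1 := by omega
  all_goals simp [hu, hv]

variable [Fintype ι]

lemma spinFlip_one (s : Finset ι) :
    spinFlip s (1 : Matrix (ι → Fin 2) (ι → Fin 2) R) = 1 := by
  ext u v
  rw [spinFlip_apply]
  rcases eq_or_ne u v with rfl | huv
  · simp [← two_mul]
  · have hflip : s.piecewise (1 - v) u ≠ s.piecewise (1 - u) v := by
      obtain ⟨i, hi⟩ := Function.ne_iff.mp huv
      refine Function.ne_iff.mpr ⟨i, ?_⟩
      by_cases his : i ∈ s <;> simp [his, hi, Ne.symm hi]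
    rw [one_apply_ne huv, one_apply_ne hflip, mul_zero]

lemma spinFlip_eq_of_singleton {T : Matrix (ι → Fin 2) (ι → Fin 2) R} {k : R}
    (hT : ∀ c, spinFlip {c} T = k • 1 - T) (s : Finset ι) :
    spinFlip s T = if Even s.card then T else k • 1 - T := by
  induction s using Finset.induction_on with
  | empty => simp [spinFlip_empty]
  | insert c s hc ih =>
    rw [spinFlip_insert hc, ih, Finset.card_insert_of_notMem hc]
    by_cases hs : Even s.card <;> simp [hs, hT, Nat.even_add_one, spinFlip_one]

lemma posSemidef_spinFlip_univ {T : Matrix (ι → Fin 2) (ι → Fin 2) ℂ}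
    (hT : T.PosSemidef) : (spinFlip Finset.univ T).PosSemidef := by
  let sign : Matrix (ι → Fin 2) (ι → Fin 2) ℂ := diagonal fun u => ∏ i, (-1) ^ (u i : ℕ)
  have hconj : spinFlip Finset.univ T = signᴴ * (T.submatrix (1 - ·) (1 - ·))ᵀ * sign := by
    ext u v
    simp only [sign, spinFlip_apply, diagonal_conjTranspose, mul_diagonal, diagonal_mul,
      transpose_apply, submatrix_apply, Finset.piecewise_univ, pow_add, Finset.prod_mul_distrib,
      Pi.star_apply, star_prod, star_pow, star_neg, star_one]
    ring
  rw [hconj]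
  exact ((hT.submatrix _).transpose).conjTranspose_mul_mul_same sign

lemma spinFlip_singleton_of_marginal {T : Matrix (ι → Fin 2) (ι → Fin 2) R} {k : R} {c : ι}
    (hmarg : ∀ u v : ι → Fin 2, u c = v c →
      ∑ t, T (Function.update u c t) (Function.update v c t) = if u = v then k else 0) :
    spinFlip {c} T = k • 1 - T := by
  ext u v
  rw [spinFlip_singleton_apply, Matrix.sub_apply, Matrix.smul_apply, one_apply, smul_eq_mul,
    mul_ite, mul_one, mul_zero]
  congr 1
  split_ifs with hc huv huv
  · rw [hmarg u v hc, if_pos huv]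
  · rw [hmarg u v hc, if_neg huv]
  · exact absurd (congrFun huv c) hc
  · rfl

lemma posSemidef_smul_one_sub_of_marginals (hodd : Odd (Fintype.card ι))
    {T : Matrix (ι → Fin 2) (ι → Fin 2) ℂ} (hT : T.PosSemidef) {k : ℂ}
    (hmarg : ∀ (c : ι) (u v : ι → Fin 2), u c = v c →
      ∑ t, T (Function.update u c t) (Function.update v c t) = if u = v then k else 0) :
    (k • 1 - T).PosSemidef := by
  have hflip := spinFlip_eq_of_singleton
    (fun c => spinFlip_singleton_of_marginal (hmarg c)) Finset.univ
  rw [Finset.card_univ, if_neg (Nat.not_even_iff_odd.mpr hodd)] at hflip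
  exact hflip ▸ posSemidef_spinFlip_univ hT

end SpinFlip

section MergeEquiv

variable {α β : Type*} [DecidableEq α] {A B C : Finset α}

/-- Assignments on disjoint sets `A` and `B` amount to one on their union. The union is a variable
`C`, since it is often known in another form, such as a complement. -/
def mergeEquiv (hC : A ∪ B = C) (hAB : Disjoint A B) : (A → β) × (B → β) ≃ (C → β) where
  toFun p x := if h : x.1 ∈ A then p.1 ⟨x, h⟩
    else p.2 ⟨x, (Finset.mem_union.mp (hC ▸ x.2)).resolve_left h⟩
  invFun w := (fun x => w ⟨x, hC ▸ Finset.mem_union_left B x.2⟩,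
    fun x => w ⟨x, hC ▸ Finset.mem_union_right A x.2⟩)
  left_inv p := by
    ext x
    · simp
    · simp [Finset.disjoint_right.mp hAB x.2]
  right_inv w := by
    ext x
    simp

lemma mergeEquiv_swap (hC : A ∪ B = C) (hC' : B ∪ A = C) (hAB : Disjoint A B) (u : A → β)
    (v : B → β) : mergeEquiv hC hAB (u, v) = mergeEquiv hC' hAB.symm (v, u) := by
  rw [← Equiv.eq_symm_apply]
  have hswap := (mergeEquiv hC' hAB.symm).symm_apply_apply (v, u)
  exact (congrArg Prod.swap hswap).symm

lemma disjoint_compl_of_union_eq [Fintype α] (hC : A ∪ B = C) : Disjoint B Cᶜ :=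
  (disjoint_compl_right (a := C)).mono_left (hC ▸ Finset.subset_union_right)

lemma union_compl_eq_compl [Fintype α] (hC : A ∪ B = C) (hAB : Disjoint A B) :
    B ∪ Cᶜ = Aᶜ := by
  rw [← hC, Finset.compl_union, Finset.union_inter_distrib_left, Finset.union_compl,
    Finset.inter_univ, Finset.union_eq_right]
  exact Finset.subset_compl_iff_disjoint_left.mpr hAB

end MergeEquiv

section ReducedDensity

variable {m : ℕ} {A B C : Finset (Fin m)}

/-- `glue` as a bijection: bit strings split along the bipartition into `A` and `Aᶜ`. -/
def glueEquiv (A : Finset (Fin m)) :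
    (A → Fin 2) × ((Aᶜ : Finset (Fin m)) → Fin 2) ≃ (Fin m → Fin 2) where
  toFun p := glue A p.1 p.2
  invFun x := (A.restrict x, Aᶜ.restrict x)
  left_inv p := by
    ext x
    · simp [glue]
    · simp [glue, Finset.mem_compl.mp x.2]
  right_inv x := by
    ext i
    simp [glue]

lemma glue_mergeEquiv (hC : A ∪ B = C) (hAB : Disjoint A B) (hA : B ∪ Cᶜ = Aᶜ)
    (hBC : Disjoint B Cᶜ) (u : A → Fin 2) (b : B → Fin 2)
    (w : (Cᶜ : Finset (Fin m)) → Fin 2) :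
    glue A u (mergeEquiv hA hBC (b, w)) = glue C (mergeEquiv hC hAB (u, b)) w := by
  subst hC
  ext x
  by_cases hxA : x ∈ A <;> by_cases hxB : x ∈ B <;> simp [glue, mergeEquiv, hxA, hxB]

variable (ψ : (Fin m → Fin 2) → ℂ)

/-- The amplitudes of `ψ` as a matrix with respect to the bipartition of the qubits into `A`
and `Aᶜ`. -/
def amplitudeMatrix (A : Finset (Fin m)) :
    Matrix (A → Fin 2) ((Aᶜ : Finset (Fin m)) → Fin 2) ℂ :=
  of fun u w => ψ (glue A u w)

lemma reducedDensity_eq_mul_conjTranspose (A : Finset (Fin m)) :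
    reducedDensity ψ A = amplitudeMatrix ψ A * (amplitudeMatrix ψ A)ᴴ :=
  rfl

lemma posSemidef_reducedDensity (A : Finset (Fin m)) : (reducedDensity ψ A).PosSemidef :=
  posSemidef_self_mul_conjTranspose (amplitudeMatrix ψ A)

lemma reducedDensity_compl (A : Finset (Fin m)) :
    reducedDensity ψ Aᶜ = ((amplitudeMatrix ψ A)ᴴ * amplitudeMatrix ψ A)ᵀ := by
  ext w w'
  let e : (A → Fin 2) ≃ ((Aᶜᶜ : Finset (Fin m)) → Fin 2) :=
    Equiv.arrowCongr (Equiv.subtypeEquivRight (by simp)) (Equiv.refl _)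
  have hglue (u : A → Fin 2) (w) : glue Aᶜ w (e u) = glue A u w := by
    ext x
    by_cases hx : x ∈ A
    · simp only [glue, hx, Finset.mem_compl, not_true, dif_pos, dif_neg, not_false_eq_true]
      rfl
    · simp [glue, hx]
  rw [reducedDensity, ← Equiv.sum_comp e]
  simp only [hglue, transpose_apply, mul_apply, conjTranspose_apply, amplitudeMatrix, of_apply]
  exact Finset.sum_congr rfl fun u _ => mul_comm _ _

lemma sent_compl (A : Finset (Fin m)) : Sent ψ Aᶜ = Sent ψ A := by
  rw [Sent, Sent, reducedDensity_compl,
    vnEntropy_transpose (isHermitian_conjTranspose_mul_self _),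
    ← vnEntropy_mul_conjTranspose_comm, reducedDensity_eq_mul_conjTranspose]

lemma partialTraceRight_reducedDensity (hC : A ∪ B = C) (hAB : Disjoint A B) :
    partialTraceRight
      ((reducedDensity ψ C).submatrix (mergeEquiv hC hAB) (mergeEquiv hC hAB)) =
        reducedDensity ψ A := by
  ext u v
  rw [reducedDensity,
    ← (mergeEquiv (union_compl_eq_compl hC hAB) (disjoint_compl_of_union_eq hC)).sum_comp,
    Fintype.sum_prod_type]
  simp only [glue_mergeEquiv hC hAB]
  rfl

lemma partialTraceLeft_reducedDensity (hC : A ∪ B = C) (hAB : Disjoint A B) :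
    partialTraceLeft
      ((reducedDensity ψ C).submatrix (mergeEquiv hC hAB) (mergeEquiv hC hAB)) =
        reducedDensity ψ B := by
  have hC' : B ∪ A = C := Finset.union_comm B A ▸ hC
  rw [← partialTraceRight_reducedDensity ψ hC' hAB.symm]
  ext v v'
  simp only [partialTraceLeft, partialTraceRight, of_apply, submatrix_apply,
    mergeEquiv_swap hC hC' hAB]

lemma sum_reducedDensity_update {c : Fin m} (hc : c ∈ C) (u v : C → Fin 2) :
    ∑ t, reducedDensity ψ C (Function.update u ⟨c, hc⟩ t) (Function.update v ⟨c, hc⟩ t) =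
      reducedDensity ψ (C.erase c) (Finset.restrict₂ (π := fun _ => Fin 2) (C.erase_subset c) u)
        (Finset.restrict₂ (π := fun _ => Fin 2) (C.erase_subset c) v) := by
  have hC : C.erase c ∪ {c} = C := by
    rw [Finset.union_comm, ← Finset.insert_eq, Finset.insert_erase hc]
  have hd : Disjoint (C.erase c) {c} := Finset.disjoint_singleton_right.mpr (C.notMem_erase c)
  have hmerge (u : C → Fin 2) (t : Fin 2) :
      mergeEquiv hC hd (Finset.restrict₂ (π := fun _ => Fin 2) (C.erase_subset c) u, fun _ => t) =
        Function.update u ⟨c, hc⟩ t := by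
    ext x
    by_cases hx : x = ⟨c, hc⟩
    · simp [mergeEquiv, hx]
    · have hx' : x.1 ≠ c := fun h => hx (Subtype.ext h)
      simp [mergeEquiv, hx, hx']
  rw [← partialTraceRight_reducedDensity ψ hC hd, partialTraceRight, of_apply,
    ← (Equiv.funUnique ({c} : Finset (Fin m)) (Fin 2)).symm.sum_comp]
  simp only [submatrix_apply, ← hmerge]
  rfl

variable {ψ}

lemma trace_reducedDensity (hψ : ∑ x, ‖ψ x‖ ^ 2 = 1) (A : Finset (Fin m)) :
    (reducedDensity ψ A).trace = 1 := by
  calc (reducedDensity ψ A).trace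
      = ∑ u, ∑ w, (‖ψ (glueEquiv A (u, w))‖ ^ 2 : ℂ) := by
        simp only [← Complex.mul_conj']
        rfl
    _ = ∑ x, (‖ψ x‖ ^ 2 : ℂ) := by
        rw [← Fintype.sum_prod_type', Equiv.sum_comp (glueEquiv A) fun x => (‖ψ x‖ ^ 2 : ℂ)]
    _ = 1 := mod_cast hψ

lemma sent_le_add_of_union_eq (hψ : ∑ x, ‖ψ x‖ ^ 2 = 1) (hC : A ∪ B = C) (hAB : Disjoint A B) :
    Sent ψ C ≤ Sent ψ A + Sent ψ B := by
  have htr :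
      ((reducedDensity ψ C).submatrix (mergeEquiv hC hAB) (mergeEquiv hC hAB)).trace = 1 :=
    (Equiv.sum_comp (mergeEquiv hC hAB) fun u => reducedDensity ψ C u u).trans
      (trace_reducedDensity hψ C)
  have hsub := vnEntropy_le_partialTrace_add_partialTrace
    ((posSemidef_reducedDensity ψ C).submatrix (mergeEquiv hC hAB)) htr
  rwa [vnEntropy_submatrix_equiv (posSemidef_reducedDensity ψ C).isHermitian,
    partialTraceRight_reducedDensity, partialTraceLeft_reducedDensity] at hsub

-- The Araki–Lieb inequality: subadditivity for `B` and `Cᶜ`, by purity.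
lemma sent_le_add_sent_union (hψ : ∑ x, ‖ψ x‖ ^ 2 = 1) (hC : A ∪ B = C) (hAB : Disjoint A B) :
    Sent ψ A ≤ Sent ψ B + Sent ψ C := by
  rw [← sent_compl ψ A, ← sent_compl ψ C]
  exact sent_le_add_of_union_eq hψ (union_compl_eq_compl hC hAB) (disjoint_compl_of_union_eq hC)

lemma sent_le_card_mul_log_two (hψ : ∑ x, ‖ψ x‖ ^ 2 = 1) (A : Finset (Fin m)) :
    Sent ψ A ≤ A.card * Real.log 2 := by
  simpa [Sent] using
    vnEntropy_le_log_card (posSemidef_reducedDensity ψ A) (trace_reducedDensity hψ A)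

lemma maximallyMixed_of_sent_eq (hψ : ∑ x, ‖ψ x‖ ^ 2 = 1)
    (hmax : Sent ψ A = A.card * Real.log 2) : MaximallyMixed ψ A := by
  simpa [MaximallyMixed] using eq_inv_card_smul_one_of_vnEntropy_eq_log_card
    (posSemidef_reducedDensity ψ A) (trace_reducedDensity hψ A) (by simpa [Sent] using hmax)

lemma le_sent_of_odd_of_maximallyMixed_erase (hψ : ∑ x, ‖ψ x‖ ^ 2 = 1) (hodd : Odd C.card)
    (hmix : ∀ c ∈ C, MaximallyMixed ψ (C.erase c)) :
    (C.card - 1) * Real.log 2 ≤ Sent ψ C := by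
  let k : ℝ := ((2 : ℝ) ^ (C.card - 1))⁻¹
  have hmarg (c : C) (u v : C → Fin 2) (huv : u c = v c) :
      ∑ t, reducedDensity ψ C (Function.update u c t) (Function.update v c t) =
        if u = v then (k : ℂ) else 0 := by
    have hrestrict : Finset.restrict₂ (π := fun _ => Fin 2) (C.erase_subset c.1) u =
        Finset.restrict₂ (π := fun _ => Fin 2) (C.erase_subset c.1) v ↔ u = v := by
      refine ⟨fun h => funext fun x => ?_, fun h => h ▸ rfl⟩
      by_cases hx : x = c
      · rw [hx, huv]
      · exact congrFun h ⟨x, Finset.mem_erase.mpr ⟨Subtype.coe_ne_coe.mpr hx, x.2⟩⟩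
    rw [sum_reducedDensity_update ψ c.2, hmix c c.2, Finset.card_erase_of_mem c.2]
    simp [one_apply, hrestrict, k]
  have hle := posSemidef_smul_one_sub_of_marginals (by simpa using hodd)
    (posSemidef_reducedDensity ψ C) hmarg
  have hlog := neg_log_le_vnEntropy (posSemidef_reducedDensity ψ C) (trace_reducedDensity hψ C) hle
  simpa [k, Sent, Nat.cast_sub hodd.pos] using hlog

end ReducedDensity

section ThreeQubits

variable {m : ℕ} {ψ : (Fin m → Fin 2) → ℂ} {o a b : Fin m}

lemma sent_eq_of_secrecy_of_recovery (hψ : ∑ x, ‖ψ x‖ ^ 2 = 1) (hoa : o ≠ a) (hob : o ≠ b)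
    (hab : a ≠ b) (hsec_a : Sent ψ {o} + Sent ψ {a} - Sent ψ {o, a} = 0)
    (hsec_b : Sent ψ {o} + Sent ψ {b} - Sent ψ {o, b} = 0)
    (hrec : Sent ψ {o} + Sent ψ {a, b} - Sent ψ {o, a, b} = 2 * Real.log 2) :
    Sent ψ {o, a} = 2 * Real.log 2 ∧ Sent ψ {o, b} = 2 * Real.log 2 ∧
      Sent ψ {a, b} = 2 * Real.log 2 ∧ Sent ψ {o, a, b} = Real.log 2 := by
  have bound (c : Fin m) : Sent ψ {c} ≤ Real.log 2 := by
    simpa using sent_le_card_mul_log_two hψ {c}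
  have subadditive_ab : Sent ψ {a, b} ≤ Sent ψ {a} + Sent ψ {b} :=
    sent_le_add_of_union_eq hψ rfl (by simpa)
  have arakiLieb_o : Sent ψ {a, b} ≤ Sent ψ {o} + Sent ψ {o, a, b} :=
    sent_le_add_sent_union hψ (by grind) (by simp [hoa, hob])
  have arakiLieb_a : Sent ψ {o, b} ≤ Sent ψ {a} + Sent ψ {o, a, b} :=
    sent_le_add_sent_union hψ (by grind) (by simp [hoa.symm, hab])
  have arakiLieb_b : Sent ψ {o, a} ≤ Sent ψ {b} + Sent ψ {o, a, b} :=
    sent_le_add_sent_union hψ (by grind) (by simp [hob.symm, hab.symm])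
  have bound_o := bound o
  have bound_a := bound a
  have bound_b := bound b
  refine ⟨?_, ?_, ?_, ?_⟩ <;> linarith

theorem not_recovery_of_secrecy (hψ : ∑ x, ‖ψ x‖ ^ 2 = 1) (hoa : o ≠ a) (hob : o ≠ b)
    (hab : a ≠ b) (hsec_a : Sent ψ {o} + Sent ψ {a} - Sent ψ {o, a} = 0)
    (hsec_b : Sent ψ {o} + Sent ψ {b} - Sent ψ {o, b} = 0) :
    Sent ψ {o} + Sent ψ {a, b} - Sent ψ {o, a, b} ≠ 2 * Real.log 2 := by
  intro hrec
  obtain ⟨hSoa, hSob, hSab, hSoab⟩ :=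
    sent_eq_of_secrecy_of_recovery hψ hoa hob hab hsec_a hsec_b hrec
  have mixed_pair {x y : Fin m} (hxy : x ≠ y) (hS : Sent ψ {x, y} = 2 * Real.log 2) :
      MaximallyMixed ψ {x, y} :=
    maximallyMixed_of_sent_eq hψ (by rw [hS, Finset.card_pair hxy, Nat.cast_ofNat])
  have hcard : ({o, a, b} : Finset (Fin m)).card = 3 := Finset.card_eq_three.mpr
    ⟨o, a, b, hoa, hob, hab, rfl⟩
  have hmix : ∀ c ∈ ({o, a, b} : Finset (Fin m)),
      MaximallyMixed ψ (({o, a, b} : Finset (Fin m)).erase c) := by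
    have erase_o : ({o, a, b} : Finset (Fin m)).erase o = {a, b} := by grind
    have erase_a : ({o, a, b} : Finset (Fin m)).erase a = {o, b} := by grind
    have erase_b : ({o, a, b} : Finset (Fin m)).erase b = {o, a} := by grind
    simp only [Finset.forall_mem_insert, Finset.mem_singleton, forall_eq, erase_o, erase_a, erase_b]
    exact ⟨mixed_pair hab hSab, mixed_pair hob hSob, mixed_pair hoa hSoa⟩
  have hlower := le_sent_of_odd_of_maximallyMixed_erase hψ (hcard ▸ by decide) hmix
  rw [hcard, hSoab] at hlower
  norm_num at hlower
  linarith [Real.log_pos one_lt_two]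

end ThreeQubits

section AccessStructure

variable {n : ℕ} {Γ : Finset (Fin n) → Prop}

lemma not_authorized_singleton [Nontrivial (Fin n)] (hmono : Monotonic Γ) (hnc : NoCloning Γ)
    (hnr : NoRedundancy Γ) (i : Fin n) : ¬ Γ {i} := by
  intro hi
  obtain ⟨j, hj⟩ := exists_ne i
  obtain ⟨A, ⟨hA, hmin⟩, hjA⟩ := hnr j
  by_cases hiA : i ∈ A
  · exact hmin {i} (by grind) hi
  · exact (hnc {i}).mp hi (hmono A _ hA (by simpa))

lemma IsPureQSSState.not_authorized_pair {ψ : (Fin (n + 1) → Fin 2) → ℂ}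
    (hψ : IsPureQSSState Γ ψ) {i j : Fin n} (hij : i ≠ j) (hi : ¬ Γ {i}) (hj : ¬ Γ {j}) :
    ¬ Γ {i, j} := by
  intro hpair
  have hsec_i := hψ.secrecy _ hi
  have hsec_j := hψ.secrecy _ hj
  have hrec := hψ.recover _ hpair
  simp only [posOf, Finset.image_insert, Finset.image_singleton] at hsec_i hsec_j hrec
  exact not_recovery_of_secrecy hψ.normalized i.succ_ne_zero.symm j.succ_ne_zero.symm
    ((Fin.succ_injective n).ne hij) hsec_i hsec_j hrec

lemma IsPureQSSState.not_authorized_of_card_lt_three [Nontrivial (Fin n)]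
    {ψ : (Fin (n + 1) → Fin 2) → ℂ} (hψ : IsPureQSSState Γ ψ) (hmono : Monotonic Γ)
    (hnc : NoCloning Γ) (hnr : NoRedundancy Γ) {A : Finset (Fin n)} (hA : A.card < 3) : ¬ Γ A := by
  have hsingle := not_authorized_singleton hmono hnc hnr
  interval_cases hcard : A.card
  · obtain rfl := Finset.card_eq_zero.mp hcard
    obtain ⟨i, -⟩ := exists_pair_ne (Fin n)
    exact fun h => hsingle i (hmono _ _ h (Finset.empty_subset _))
  · obtain ⟨i, rfl⟩ := Finset.card_eq_one.mp hcard
    exact hsingle i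
  · obtain ⟨i, j, hij, rfl⟩ := Finset.card_eq_two.mp hcard
    exact hψ.not_authorized_pair hij (hsingle i) (hsingle j)

lemma IsMinimal.card_eq_of_noCloning {k : ℕ} (hnc : NoCloning Γ) (hk : n < 2 * k)
    (hsmall : ∀ A, A.card < k → ¬ Γ A) {A : Finset (Fin n)} (hA : IsMinimal Γ A) :
    A.card = k := by
  by_contra hne
  have hlt : k < A.card := lt_of_le_of_ne (not_lt.mp fun h => hsmall A h hA.1) (Ne.symm hne)
  obtain ⟨B, hBA, hB⟩ := Finset.exists_subset_card_eq hlt.le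
  have hBc : Γ Bᶜ := by
    by_contra h
    exact hA.2 B (Finset.ssubset_iff_subset_ne.mpr ⟨hBA, by grind⟩) ((hnc B).mpr h)
  exact hsmall Bᶜ (by rw [Finset.card_compl, Fintype.card_fin, hB]; omega) hBc

end AccessStructure

end

theorem stmt14 (Γ : Finset (Fin 5) → Prop)
    (hmono : Monotonic Γ) (hnc : NoCloning Γ) (hnr : NoRedundancy Γ)
    (ψ : (Fin (5 + 1) → Fin 2) → ℂ) (hψ : IsPureQSSState Γ ψ) :
    ∃ k : ℕ, ∀ A : Finset (Fin 5), IsMinimal Γ A → A.card = k :=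
  ⟨3, fun _ hA => hA.card_eq_of_noCloning hnc (by norm_num) fun _ hB =>
    hψ.not_authorized_of_card_lt_three hmono hnc hnr hB⟩
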